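/- Let φ be a formula in which the atom p occurs only outside the scope of explicit negation ∼, and let α, β be formulas such that α ↔ β is X5-valid. Then φ[α/p] ↔ φ[β/p] is X5-valid. -/

import Mathlib

open scoped Classical

namespace X5Paper

/-- Explicit literals: an atom `p` or its explicit negation `∼p`. -/
inductive XLit (At : Type) : Type
  | pos : At → XLit At
  | neg : At → XLit At

/-- A set of explicit literals is consistent if it contains no atom together
with its explicit negation. -/
def Consistent {At : Type} (T : Set (XLit At)) : Prop :=
  ∀ p : At, ¬ (XLit.pos p ∈ T ∧ XLit.neg p ∈ T)

/-- Nested expressions: ⊤, ⊥, atoms, ∧, ∨, default negation ¬, explicit negation ∼. -/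
inductive NExp (At : Type) : Type
  | top : NExp At
  | bot : NExp At
  | atom : At → NExp At
  | conj : NExp At → NExp At → NExp At
  | disj : NExp At → NExp At → NExp At
  | dneg : NExp At → NExp At
  | xneg : NExp At → NExp At

variable {At : Type}

mutual
/-- Satisfaction `T ⊨ F` of a nested expression by a set of explicit literals. -/
def NExp.sat (T : Set (XLit At)) : NExp At → Prop
  | .top => True
  | .bot => False
  | .atom p => XLit.pos p ∈ T
  | .conj F G => NExp.sat T F ∧ NExp.sat T G
  | .disj F G => NExp.sat T F ∨ NExp.sat T G
  | .dneg F => ¬ NExp.sat T F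
  | .xneg F => NExp.fals T F

/-- Falsification `T ⫤ F` of a nested expression by a set of explicit literals. -/
def NExp.fals (T : Set (XLit At)) : NExp At → Prop
  | .top => False
  | .bot => True
  | .atom p => XLit.neg p ∈ T
  | .conj F G => NExp.fals T F ∨ NExp.fals T G
  | .disj F G => NExp.fals T F ∧ NExp.fals T G
  | .dneg F => NExp.sat T F
  | .xneg F => NExp.sat T F
end

/-- The reduct `F^T` of a nested expression. -/
noncomputable def NExp.reduct (T : Set (XLit At)) : NExp At → NExp At
  | .top => .top
  | .bot => .bot
  | .atom p => .atom p
  | .conj F G => .conj (NExp.reduct T F) (NExp.reduct T G)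
  | .disj F G => .disj (NExp.reduct T F) (NExp.reduct T G)
  | .dneg F => if NExp.sat T F then .bot else .top
  | .xneg F => .xneg (NExp.reduct T F)

/-- Formulas: atoms, ⊥, ∧, ∨, →, explicit negation ∼. -/
inductive Frm (At : Type) : Type
  | atom : At → Frm At
  | bot : Frm At
  | conj : Frm At → Frm At → Frm At
  | disj : Frm At → Frm At → Frm At
  | impl : Frm At → Frm At → Frm At
  | xneg : Frm At → Frm At

/-- Default negation `¬φ := φ → ⊥`. -/
def Frm.neg (φ : Frm At) : Frm At := Frm.impl φ Frm.bot

/-- `⊤ := ¬⊥`. -/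
def Frm.top : Frm At := Frm.neg Frm.bot

/-- Weak equivalence `φ ↔ ψ := (φ→ψ) ∧ (ψ→φ)`. -/
def Frm.iff (φ ψ : Frm At) : Frm At := Frm.conj (Frm.impl φ ψ) (Frm.impl ψ φ)

/-- Strong equivalence connective `φ ⇔ ψ := (φ↔ψ) ∧ (∼φ↔∼ψ)`. -/
def Frm.siff (φ ψ : Frm At) : Frm At :=
  Frm.conj (Frm.iff φ ψ) (Frm.iff (Frm.xneg φ) (Frm.xneg ψ))

mutual
/-- X5 satisfaction `⟨H,T⟩ ⊨ φ`. -/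
def Sat : Set (XLit At) → Set (XLit At) → Frm At → Prop
  | H, _, .atom p => XLit.pos p ∈ H
  | _, _, .bot => False
  | H, T, .conj φ ψ => Sat H T φ ∧ Sat H T ψ
  | H, T, .disj φ ψ => Sat H T φ ∨ Sat H T ψ
  | H, T, .impl φ ψ => (Sat H T φ → Sat H T ψ) ∧ (Sat T T φ → Sat T T ψ)
  | H, T, .xneg φ => Fals H T φ

/-- X5 falsification `⟨H,T⟩ ⫤ φ`. -/
def Fals : Set (XLit At) → Set (XLit At) → Frm At → Prop
  | H, _, .atom p => XLit.neg p ∈ H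
  | _, _, .bot => True
  | H, T, .conj φ ψ => Fals H T φ ∨ Fals H T ψ
  | H, T, .disj φ ψ => Fals H T φ ∧ Fals H T ψ
  | H, T, .impl φ ψ => Sat T T φ ∧ Fals H T ψ
  | H, T, .xneg φ => Sat H T φ
end

/-- X5 validity: satisfied by every X5-interpretation `⟨H,T⟩`. -/
def X5Valid (φ : Frm At) : Prop :=
  ∀ H T : Set (XLit At), Consistent H → Consistent T → H ⊆ T → Sat H T φ

/-- Nested expressions viewed as formulas (`¬F := F → ⊥`, `⊤ := ¬⊥`). -/
def NExp.toFrm : NExp At → Frm At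
  | .top => Frm.top
  | .bot => .bot
  | .atom p => .atom p
  | .conj F G => .conj F.toFrm G.toFrm
  | .disj F G => .disj F.toFrm G.toFrm
  | .dneg F => Frm.neg F.toFrm
  | .xneg F => .xneg F.toFrm

/-- Uniform substitution `φ[α/p]`. -/
noncomputable def Frm.subst (p : At) (α : Frm At) : Frm At → Frm At
  | .atom q => if q = p then α else .atom q
  | .bot => .bot
  | .conj φ ψ => .conj (Frm.subst p α φ) (Frm.subst p α ψ)
  | .disj φ ψ => .disj (Frm.subst p α φ) (Frm.subst p α ψ)
  | .impl φ ψ => .impl (Frm.subst p α φ) (Frm.subst p α ψ)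
  | .xneg φ => .xneg (Frm.subst p α φ)

/-- A formula contains no explicit negation. -/
def NoXneg : Frm At → Prop
  | .atom _ => True
  | .bot => True
  | .conj φ ψ => NoXneg φ ∧ NoXneg ψ
  | .disj φ ψ => NoXneg φ ∧ NoXneg ψ
  | .impl φ ψ => NoXneg φ ∧ NoXneg ψ
  | .xneg _ => False

/-- HT satisfaction for (∼-free) formulas; the `∼` clause is a dummy. -/
def HTSat : Set At → Set At → Frm At → Prop
  | H, _, .atom p => p ∈ H
  | _, _, .bot => False
  | H, T, .conj φ ψ => HTSat H T φ ∧ HTSat H T ψ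
  | H, T, .disj φ ψ => HTSat H T φ ∨ HTSat H T ψ
  | H, T, .impl φ ψ => (HTSat H T φ → HTSat H T ψ) ∧ (HTSat T T φ → HTSat T T ψ)
  | _, _, .xneg _ => False

/-- HT validity for ∼-free formulas. -/
def HTValid (φ : Frm At) : Prop :=
  ∀ H T : Set At, H ⊆ T → HTSat H T φ

/-- Atom `p` occurs in a formula. -/
def Frm.occurs (p : At) : Frm At → Prop
  | .atom q => q = p
  | .bot => False
  | .conj φ ψ => Frm.occurs p φ ∨ Frm.occurs p ψ
  | .disj φ ψ => Frm.occurs p φ ∨ Frm.occurs p ψ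
  | .impl φ ψ => Frm.occurs p φ ∨ Frm.occurs p ψ
  | .xneg φ => Frm.occurs p φ

/-- Atom `p` occurs only outside the scope of explicit negation `∼`. -/
def OutsideXneg (p : At) : Frm At → Prop
  | .atom _ => True
  | .bot => True
  | .conj φ ψ => OutsideXneg p φ ∧ OutsideXneg p ψ
  | .disj φ ψ => OutsideXneg p φ ∧ OutsideXneg p ψ
  | .impl φ ψ => OutsideXneg p φ ∧ OutsideXneg p ψ
  | .xneg φ => ¬ Frm.occurs p φ

/-- A rule `F → G` of a program. -/
abbrev Rule (At : Type) := NExp At × NExp At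

/-- `T` is a model of a program: it satisfies the head whenever it satisfies the body. -/
def NModels (T : Set (XLit At)) (Prog : Set (Rule At)) : Prop :=
  ∀ r ∈ Prog, NExp.sat T r.1 → NExp.sat T r.2

/-- The reduct `Π^T` of a program. -/
noncomputable def progReduct (T : Set (XLit At)) (Prog : Set (Rule At)) : Set (Rule At) :=
  (fun r : Rule At => (NExp.reduct T r.1, NExp.reduct T r.2)) '' Prog

/-- `T` is an answer set of `Π`: a ⊆-minimal (consistent) model of the reduct `Π^T`. -/
def AnswerSet (Prog : Set (Rule At)) (T : Set (XLit At)) : Prop :=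
  Consistent T ∧ NModels T (progReduct T Prog) ∧
    ∀ T' : Set (XLit At), Consistent T' → T' ⊆ T → NModels T' (progReduct T Prog) → T' = T

/-- The theory corresponding to a program: each rule `F → G` read as an implication. -/
def ruleTheory (Prog : Set (Rule At)) : Set (Frm At) :=
  (fun r : Rule At => Frm.impl r.1.toFrm r.2.toFrm) '' Prog

/-- `⟨T,T⟩` is an equilibrium model of the theory `Γ`. -/
def EqModel (Γ : Set (Frm At)) (T : Set (XLit At)) : Prop :=
  Consistent T ∧ (∀ φ ∈ Γ, Sat T T φ) ∧
    ¬ ∃ H : Set (XLit At), Consistent H ∧ H ⊂ T ∧ ∀ φ ∈ Γ, Sat H T φ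

mutual
/-- Generalized Ferraris reduct `φ^T₊` of a formula (a nested expression). -/
noncomputable def redPos (T : Set (XLit At)) : Frm At → NExp At
  | .atom p => if XLit.pos p ∈ T then .atom p else .bot
  | .bot => .bot
  | .conj α β => if Sat T T (Frm.conj α β) then .conj (redPos T α) (redPos T β) else .bot
  | .disj α β => if Sat T T (Frm.disj α β) then .disj (redPos T α) (redPos T β) else .bot
  | .impl α β => if Sat T T (Frm.impl α β) then .disj (.dneg (redPos T α)) (redPos T β) else .bot
  | .xneg α => if Sat T T (Frm.xneg α) then .xneg (redNeg T α) else .bot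

/-- Generalized Ferraris reduct `φ^T₋` of a formula (a nested expression). -/
noncomputable def redNeg (T : Set (XLit At)) : Frm At → NExp At
  | .atom p => if XLit.neg p ∈ T then .atom p else .top
  | .bot => .bot
  | .conj α β => if Fals T T (Frm.conj α β) then .conj (redNeg T α) (redNeg T β) else .top
  | .disj α β => if Fals T T (Frm.disj α β) then .disj (redNeg T α) (redNeg T β) else .top
  | .impl α β => if Fals T T (Frm.impl α β) then redNeg T β else .top
  | .xneg α => if Fals T T (Frm.xneg α) then .xneg (redPos T α) else .top
end

mutual
/-- Generalized Ferraris reduct `F^T₊` of a nested expression. -/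
noncomputable def nRedPos (T : Set (XLit At)) : NExp At → NExp At
  | .top => .top
  | .bot => .bot
  | .atom p => if XLit.pos p ∈ T then .atom p else .bot
  | .conj α β => if NExp.sat T (NExp.conj α β) then .conj (nRedPos T α) (nRedPos T β) else .bot
  | .disj α β => if NExp.sat T (NExp.disj α β) then .disj (nRedPos T α) (nRedPos T β) else .bot
  | .dneg α => if NExp.sat T (NExp.dneg α) then .dneg (nRedPos T α) else .bot
  | .xneg α => if NExp.sat T (NExp.xneg α) then .xneg (nRedNeg T α) else .bot

/-- Generalized Ferraris reduct `F^T₋` of a nested expression. -/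
noncomputable def nRedNeg (T : Set (XLit At)) : NExp At → NExp At
  | .top => .top
  | .bot => .bot
  | .atom p => if XLit.neg p ∈ T then .atom p else .top
  | .conj α β => if NExp.fals T (NExp.conj α β) then .conj (nRedNeg T α) (nRedNeg T β) else .top
  | .disj α β => if NExp.fals T (NExp.disj α β) then .disj (nRedNeg T α) (nRedNeg T β) else .top
  | .dneg α => if NExp.fals T (NExp.dneg α) then .bot else .top
  | .xneg α => if NExp.fals T (NExp.xneg α) then .xneg (nRedPos T α) else .top
end

/-- The five-valued valuation `M(φ)` of `M = ⟨H,T⟩`. -/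
noncomputable def val (H T : Set (XLit At)) : Frm At → ℤ
  | .atom p =>
      if XLit.pos p ∈ H then 2
      else if XLit.neg p ∈ H then -2
      else if XLit.pos p ∈ T then 1
      else if XLit.neg p ∈ T then -1
      else 0
  | .bot => -2
  | .conj φ ψ => min (val H T φ) (val H T ψ)
  | .disj φ ψ => max (val H T φ) (val H T ψ)
  | .impl φ ψ => if val H T φ ≤ max (val H T ψ) 0 then 2 else val H T ψ
  | .xneg φ => - val H T φ

/-! Except for `∼φ`, satisfaction of a compound formula at `⟨H,T⟩` depends only on satisfaction
of its immediate subformulas at `⟨H,T⟩` and `⟨T,T⟩`; falsification enters only through `∼`, under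
which substitution for `p` does nothing. So `φ[α/p]` at `⟨H,T⟩` sees `α` only through its
satisfaction at `⟨H,T⟩` and `⟨T,T⟩`, on which `α ↔ β` says that `α` and `β` agree. -/

section Replacement

variable {φ ψ α β : Frm At} {p : At} {H T : Set (XLit At)}

theorem Frm.subst_eq_self_of_not_occurs (h : ¬ φ.occurs p) : Frm.subst p α φ = φ := by
  induction φ with
  | atom q => exact if_neg h
  | bot => rfl
  | conj φ ψ ihφ ihψ | disj φ ψ ihφ ihψ | impl φ ψ ihφ ihψ =>
    obtain ⟨hφ, hψ⟩ := not_or.mp h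
    simp only [Frm.subst, ihφ hφ, ihψ hψ]
  | xneg φ ih => exact congrArg Frm.xneg (ih h)

theorem sat_iff :
    Sat H T (φ.iff ψ) ↔ (Sat H T φ ↔ Sat H T ψ) ∧ (Sat T T φ ↔ Sat T T ψ) := by
  simp only [Frm.iff, Sat]
  exact and_and_and_comm.trans (and_congr iff_def.symm iff_def.symm)

theorem OutsideXneg.sat_subst_congr (hout : OutsideXneg p φ)
    (hH : Sat H T α ↔ Sat H T β) (hT : Sat T T α ↔ Sat T T β) :
    Sat H T (Frm.subst p α φ) ↔ Sat H T (Frm.subst p β φ) := by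
  induction φ generalizing H with
  | atom q =>
    by_cases hq : q = p
    · simpa only [Frm.subst, if_pos hq] using hH
    · simp only [Frm.subst, if_neg hq]
  | bot => exact Iff.rfl
  | conj φ ψ ihφ ihψ =>
    simpa only [Frm.subst, Sat] using and_congr (ihφ hout.1 hH) (ihψ hout.2 hH)
  | disj φ ψ ihφ ihψ =>
    simpa only [Frm.subst, Sat] using or_congr (ihφ hout.1 hH) (ihψ hout.2 hH)
  | impl φ ψ ihφ ihψ =>
    simpa only [Frm.subst, Sat] using and_congr
      (imp_congr (ihφ hout.1 hH) (ihψ hout.2 hH)) (imp_congr (ihφ hout.1 hT) (ihψ hout.2 hT))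
  | xneg φ =>
    have hp : ¬ φ.xneg.occurs p := hout
    rw [Frm.subst_eq_self_of_not_occurs hp, Frm.subst_eq_self_of_not_occurs hp]

theorem stmt16_general (hout : OutsideXneg p φ) (h : Sat H T (α.iff β)) :
    Sat H T (Frm.iff (Frm.subst p α φ) (Frm.subst p β φ)) := by
  obtain ⟨hH, hT⟩ := sat_iff.mp h
  exact sat_iff.mpr ⟨hout.sat_subst_congr hH hT, hout.sat_subst_congr hT hT⟩

end Replacement

/-- if atom `p` occurs in `φ` only outside the scope of explicit
negation and `α ↔ β` is X5-valid, then `φ[α/p] ↔ φ[β/p]` is X5-valid. -/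
theorem stmt16 (At : Type) (φ : Frm At) (p : At) (hout : OutsideXneg p φ)
    (α β : Frm At) (hiff : X5Valid (Frm.iff α β)) :
    X5Valid (Frm.iff (Frm.subst p α φ) (Frm.subst p β φ)) :=
  fun H T hH hT hHT => stmt16_general hout (hiff H T hH hT hHT)

end X5Paper
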